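/- The 15 degrees of freedom of the lowest-order normal-normal stress element are unisolvent for X_T: the linear map from X_T to ℝ⁶ × 𝕊 × ℝ⁶ sending τ to (i) the six edge moments ∫₀¹ n_iᵀ τ(γ_i(s)) n_i ds and ∫₀¹ n_iᵀ τ(γ_i(s)) n_i · s ds for i = 1,2,3, (ii) the matrix ∫_T τ(x) dx (entrywise Lebesgue integral over the triangle T), and (iii) the six moments ∫_T (div τ)(x)·v_k(x) dx for a basis v₁,…,v₆ of the space of affine maps ℝ² → ℝ², is a linear isomorphism. Equivalently, if τ ∈ X_T satisfies ∫₀¹ (n_iᵀ τ(γ_i(s)) n_i)·q(s) ds = 0 for every affine q : ℝ → ℝ and every i, ∫_T τ(x) dx = 0, and ∫_T (div τ)(x)·v(x) dx = 0 for every affine v : ℝ² → ℝ², then τ = 0. -/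

import Mathlib

open MeasureTheory Matrix

noncomputable section

/-- `γ_i(s) = (1-s)·x_{i+1} + s·x_{i+2}`, the parametrization of the edge `e_i`
of the triangle with vertices `x 0, x 1, x 2` (indices modulo 3). -/
def edgePt (x : Fin 3 → Fin 2 → ℝ) (i : Fin 3) (s : ℝ) : Fin 2 → ℝ :=
  (1 - s) • x (i + 1) + s • x (i + 2)

/-- `n i` is the outward unit normal of the triangle with vertices `x` on the edge
`e_i = [x_{i+1}, x_{i+2}]`: it is a unit vector, orthogonal to the edge, and points
away from the opposite vertex `x i`. -/
def IsOuterNormal (x n : Fin 3 → Fin 2 → ℝ) : Prop :=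
  ∀ i : Fin 3, n i ⬝ᵥ n i = 1 ∧ n i ⬝ᵥ (x (i + 2) - x (i + 1)) = 0 ∧
    0 < n i ⬝ᵥ (x (i + 1) - x i)

/-- A real-valued function on the plane given by a polynomial of total degree at most 2. -/
def IsPolyDeg2 (f : (Fin 2 → ℝ) → ℝ) : Prop :=
  ∃ p : MvPolynomial (Fin 2) ℝ, p.totalDegree ≤ 2 ∧ ∀ y, f y = MvPolynomial.eval y p

/-- Membership in the local space `X_T`: symmetric-matrix-valued, entries polynomials of
total degree at most 2, and the normal-normal trace on each edge is affine in the edge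
parameter. -/
def MemXT (x n : Fin 3 → Fin 2 → ℝ)
    (τ : (Fin 2 → ℝ) → Matrix (Fin 2) (Fin 2) ℝ) : Prop :=
  (∀ y, (τ y)ᵀ = τ y) ∧
  (∀ k l : Fin 2, IsPolyDeg2 fun y => τ y k l) ∧
  (∀ i : Fin 3, ∃ a b : ℝ, ∀ s : ℝ,
    n i ⬝ᵥ (τ (edgePt x i s)).mulVec (n i) = a * s + b)

/-- Row-wise divergence of a matrix field: `(div τ)_k = ∂₁ τ_{k1} + ∂₂ τ_{k2}`. -/
def matDiv (τ : (Fin 2 → ℝ) → Matrix (Fin 2) (Fin 2) ℝ) (y : Fin 2 → ℝ) : Fin 2 → ℝ :=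
  fun k => ∑ j : Fin 2, fderiv ℝ (fun z => τ z k j) y (Pi.single j 1)

/-- The closed triangle `T = conv{x 0, x 1, x 2}`. -/
def Tset (x : Fin 3 → Fin 2 → ℝ) : Set (Fin 2 → ℝ) :=
  convexHull ℝ {x 0, x 1, x 2}

/-! Testing `div τ` against itself gives `div τ = 0`, and testing the normal-normal traces against
themselves makes them vanish on the edges. The edge-midpoint quadrature rule is exact for
quadratics, so `∫ τ = 0` says that the values of `τ` at the three edge midpoints sum to zero. The
contravariant Piola transform preserves these conditions, so it suffices to treat the reference
triangle. There each normal-normal component, vanishing on its edge, is a barycentric coordinate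
times an affine function. The three components determine `τ`, and the divergence and midpoint
conditions become a nonsingular linear system for the nine coefficients of the affine functions. -/

section Quadratics

variable {ι κ : Type*} [Fintype ι] [Fintype κ]

variable (ι) in
/-- The real quadratic functions on `ι → ℝ`. The matrix of the quadratic part is not required to be
symmetric, so it is not determined by the function. -/
def quadratics : Submodule ℝ ((ι → ℝ) → ℝ) where
  carrier := {f | ∃ (c : ℝ) (g : ι → ℝ) (H : Matrix ι ι ℝ), ∀ y, f y = c + g ⬝ᵥ y + y ⬝ᵥ H *ᵥ y}
  zero_mem' := ⟨0, 0, 0, fun y => by simp⟩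
  add_mem' := by
    rintro _ _ ⟨c, g, H, hf⟩ ⟨c', g', H', hf'⟩
    refine ⟨c + c', g + g', H + H', fun y => ?_⟩
    simp only [Pi.add_apply, hf, hf', add_dotProduct, add_mulVec, dotProduct_add]
    ring
  smul_mem' := by
    rintro r _ ⟨c, g, H, hf⟩
    refine ⟨r * c, r • g, r • H, fun y => ?_⟩
    simp only [Pi.smul_apply, hf, smul_dotProduct, smul_mulVec, dotProduct_smul, smul_eq_mul]
    ring

theorem multiset_prod_mem_quadratics {s : Multiset ι} (hs : s.card ≤ 2) :
    (fun y : ι → ℝ => (s.map y).prod) ∈ quadratics ι := by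
  classical
  obtain h | h | h : s.card = 0 ∨ s.card = 1 ∨ s.card = 2 := by omega
  · obtain rfl := Multiset.card_eq_zero.1 h
    exact ⟨1, 0, 0, fun y => by simp⟩
  · obtain ⟨i, rfl⟩ := Multiset.card_eq_one.1 h
    exact ⟨0, Pi.single i 1, 0, fun y => by simp⟩
  · obtain ⟨i, j, rfl⟩ := Multiset.card_eq_two.1 h
    exact ⟨0, 0, Matrix.single i j 1, fun y => by simp [dotProduct, mulVec, Matrix.single, ite_and]⟩

theorem eval_mem_quadratics {p : MvPolynomial ι ℝ} (hp : p.totalDegree ≤ 2) :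
    (fun y => MvPolynomial.eval y p) ∈ quadratics ι := by
  have hmonomial : (fun y => MvPolynomial.eval y p) =
      ∑ m ∈ p.support, p.coeff m • fun y : ι → ℝ => (m.toMultiset.map y).prod := by
    classical
    ext y
    simp [MvPolynomial.eval_eq, Finset.prod_multiset_map_count]
  rw [hmonomial]
  refine Submodule.sum_mem _ fun m hm => Submodule.smul_mem _ _ (multiset_prod_mem_quadratics ?_)
  rw [Finsupp.card_toMultiset]
  exact (MvPolynomial.le_totalDegree hm).trans hp

theorem IsPolyDeg2.mem_quadratics {f : (Fin 2 → ℝ) → ℝ} (hf : IsPolyDeg2 f) :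
    f ∈ quadratics (Fin 2) := by
  obtain ⟨p, hp, hfp⟩ := hf
  rw [funext hfp]
  exact eval_mem_quadratics hp

theorem comp_affine_mem_quadratics {f : (ι → ℝ) → ℝ} (hf : f ∈ quadratics ι) (a : ι → ℝ)
    (B : Matrix ι κ ℝ) : (fun y => f (a + B *ᵥ y)) ∈ quadratics κ := by
  obtain ⟨c, g, H, hf⟩ := hf
  refine ⟨c + g ⬝ᵥ a + a ⬝ᵥ H *ᵥ a, Bᵀ *ᵥ (g + H *ᵥ a + Hᵀ *ᵥ a), Bᵀ * H * B, fun y => ?_⟩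
  have hBy (v : ι → ℝ) : (Bᵀ *ᵥ v) ⬝ᵥ y = v ⬝ᵥ B *ᵥ y := by
    rw [mulVec_transpose, dotProduct_mulVec]
  have hBHB : y ⬝ᵥ (Bᵀ * H * B) *ᵥ y = B *ᵥ y ⬝ᵥ H *ᵥ B *ᵥ y := by
    rw [Matrix.mul_assoc, ← mulVec_mulVec, ← mulVec_mulVec, dotProduct_mulVec, vecMul_transpose]
  have hHa : (Hᵀ *ᵥ a) ⬝ᵥ B *ᵥ y = a ⬝ᵥ H *ᵥ B *ᵥ y := by
    rw [mulVec_transpose, ← dotProduct_mulVec]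
  simp only [hf, hBy, hBHB, mulVec_add, dotProduct_add, add_dotProduct, hHa]
  rw [dotProduct_comm (H *ᵥ a)]
  ring

theorem differentiable_of_mem_quadratics {f : (ι → ℝ) → ℝ} (hf : f ∈ quadratics ι) :
    Differentiable ℝ f := by
  obtain ⟨c, g, H, hf⟩ := hf
  rw [funext hf]
  unfold dotProduct mulVec dotProduct
  fun_prop

theorem fderiv_quadratic_apply {f : (ι → ℝ) → ℝ} {c : ℝ} {g : ι → ℝ} {H : Matrix ι ι ℝ}
    (hf : ∀ y, f y = c + g ⬝ᵥ y + y ⬝ᵥ H *ᵥ y) (y v : ι → ℝ) :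
    fderiv ℝ f y v = g ⬝ᵥ v + v ⬝ᵥ H *ᵥ y + y ⬝ᵥ H *ᵥ v := by
  have hdiff : DifferentiableAt ℝ f y := differentiable_of_mem_quadratics ⟨c, g, H, hf⟩ y
  have hline : (fun t : ℝ => f (y + t • v)) = fun t =>
      f y + (g ⬝ᵥ v + v ⬝ᵥ H *ᵥ y + y ⬝ᵥ H *ᵥ v) * t + (v ⬝ᵥ H *ᵥ v) * t ^ 2 := by
    ext t
    simp only [hf, mulVec_add, mulVec_smul, dotProduct_add, add_dotProduct, dotProduct_smul,
      smul_dotProduct, smul_eq_mul]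
    ring
  rw [← hdiff.lineDeriv_eq_fderiv, lineDeriv, hline]
  refine HasDerivAt.deriv ?_
  simpa using! (((hasDerivAt_id (0 : ℝ)).const_mul
    (g ⬝ᵥ v + v ⬝ᵥ H *ᵥ y + y ⬝ᵥ H *ᵥ v)).const_add (f y)).add
      ((hasDerivAt_pow 2 (0 : ℝ)).const_mul (v ⬝ᵥ H *ᵥ v))

theorem exists_fderiv_apply_eq_affine {f : (ι → ℝ) → ℝ} (hf : f ∈ quadratics ι) (v : ι → ℝ) :
    ∃ (a : ι → ℝ) (b : ℝ), ∀ y, fderiv ℝ f y v = a ⬝ᵥ y + b := by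
  obtain ⟨c, g, H, hf⟩ := hf
  refine ⟨v ᵥ* H + H *ᵥ v, g ⬝ᵥ v, fun y => ?_⟩
  rw [fderiv_quadratic_apply hf, add_dotProduct, ← dotProduct_mulVec, dotProduct_comm (H *ᵥ v)]
  ring

end Quadratics

theorem affineMap_eq_zero_of_setIntegral_mul_self {E : Type*} [NormedAddCommGroup E]
    [NormedSpace ℝ E] [FiniteDimensional ℝ E] [MeasurableSpace E] [BorelSpace E] {μ : Measure E}
    [μ.IsOpenPosMeasure] [IsFiniteMeasureOnCompacts μ] {s : Set E} (hs : IsCompact s)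
    (hint : (interior s).Nonempty) {f : E →ᵃ[ℝ] ℝ} (h : ∫ y in s, f y * f y ∂μ = 0) : f = 0 := by
  have hcont : Continuous f := f.continuous_of_finiteDimensional
  have hae : (fun y => f y * f y) =ᵐ[μ.restrict s] 0 :=
    (setIntegral_eq_zero_iff_of_nonneg_ae (.of_forall fun y => mul_self_nonneg (f y))
      ((hcont.mul hcont).continuousOn.integrableOn_compact hs)).1 h
  have hon : Set.EqOn (fun y => f y * f y) 0 (interior s) :=
    Measure.eqOn_open_of_ae_eq (ae_restrict_of_ae_restrict_of_subset interior_subset hae)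
      isOpen_interior (hcont.mul hcont).continuousOn continuousOn_const
  exact AffineMap.ext_on (isOpen_interior.affineSpan_eq_top hint) fun y hy =>
    mul_self_eq_zero.1 (hon hy)

theorem affine_eq_zero_of_moments {φ : ℝ → ℝ} (hφ : ∃ a b : ℝ, ∀ s, φ s = a * s + b)
    (h : ∀ q : ℝ → ℝ, (∃ a b : ℝ, ∀ s, q s = a * s + b) → ∫ s in (0 : ℝ)..1, φ s * q s = 0)
    (s : ℝ) : φ s = 0 := by
  obtain ⟨a, b, hab⟩ := hφ
  let f : ℝ →ᵃ[ℝ] ℝ := (LinearMap.mulLeft ℝ a).toAffineMap + AffineMap.const ℝ ℝ b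
  obtain rfl : φ = f := funext hab
  have hself := h f ⟨a, b, hab⟩
  rw [intervalIntegral.integral_of_le zero_le_one, ← integral_Icc_eq_integral_Ioc] at hself
  have hf : f = 0 := affineMap_eq_zero_of_setIntegral_mul_self isCompact_Icc (by simp) hself
  simp [hf]

theorem affine_vector_eq_zero_of_moments {ι κ : Type*} [Fintype ι] [Fintype κ] {s : Set (ι → ℝ)}
    (hs : IsCompact s) (hint : (interior s).Nonempty) {w : (ι → ℝ) → κ → ℝ}
    (hw : ∃ (A : Matrix κ ι ℝ) (b : κ → ℝ), ∀ y, w y = A *ᵥ y + b)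
    (h : ∀ v : (ι → ℝ) → κ → ℝ, (∃ (A : Matrix κ ι ℝ) (b : κ → ℝ), ∀ y, v y = A *ᵥ y + b) →
      ∫ y in s, w y ⬝ᵥ v y = 0) (y : ι → ℝ) : w y = 0 := by
  classical
  obtain ⟨A, b, hAb⟩ := hw
  ext k
  let f : (ι → ℝ) →ᵃ[ℝ] ℝ :=
    (LinearMap.proj k ∘ₗ A.mulVecLin).toAffineMap + AffineMap.const ℝ (ι → ℝ) (b k)
  have hwf (y : ι → ℝ) : w y k = f y := congrFun (hAb y) k
  have hself : ∫ y in s, f y * f y = 0 := by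
    simpa [hwf] using h (fun y => Pi.single k (w y k)) ⟨Matrix.single k k (1 : ℝ) * A,
      Pi.single k (b k), fun y => by
        rw [hAb, ← mulVec_mulVec, single_mulVec, one_mul, Pi.add_apply, Pi.single_add]; rfl⟩
  have hf : f = 0 := affineMap_eq_zero_of_setIntegral_mul_self hs hint hself
  simp [hwf, hf]

section Divergence

variable {τ : (Fin 2 → ℝ) → Matrix (Fin 2) (Fin 2) ℝ}

theorem exists_matDiv_eq_affine (hτ : ∀ k l, (fun y => τ y k l) ∈ quadratics (Fin 2)) :
    ∃ (A : Matrix (Fin 2) (Fin 2) ℝ) (b : Fin 2 → ℝ), ∀ y, matDiv τ y = A *ᵥ y + b := by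
  choose a b hab using fun k j => exists_fderiv_apply_eq_affine (hτ k j) (Pi.single j 1)
  refine ⟨Matrix.of fun k => ∑ j, a k j, fun k => ∑ j, b k j, fun y => ?_⟩
  ext k
  simp only [matDiv, hab, mulVec, of_apply, sum_dotProduct, Pi.add_apply, Finset.sum_add_distrib]

theorem fderiv_mul_comp_affine_mul_apply {ι κ m n p q : Type*} [Finite ι] [Fintype κ] [Fintype m]
    [Fintype n] {M : (ι → ℝ) → Matrix m n ℝ} (hM : ∀ i j, Differentiable ℝ fun y => M y i j)
    (a : ι → ℝ) (B : Matrix ι κ ℝ) (P : Matrix p m ℝ) (Q : Matrix n q ℝ) (k : p) (l : q)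
    (y v : κ → ℝ) :
    fderiv ℝ (fun y => (P * M (a + B *ᵥ y) * Q) k l) y v =
      (P * Matrix.of (fun i j => fderiv ℝ (fun z => M z i j) (a + B *ᵥ y) (B *ᵥ v)) * Q) k l := by
  cases nonempty_fintype ι
  have hB : HasFDerivAt (fun y => a + B *ᵥ y) B.mulVecLin.toContinuousLinearMap y :=
    B.mulVecLin.toContinuousLinearMap.hasFDerivAt.const_add a
  have hentry (i : m) (j : n) : HasFDerivAt (fun y => M (a + B *ᵥ y) i j)
      ((fderiv ℝ (fun z => M z i j) (a + B *ᵥ y)).comp B.mulVecLin.toContinuousLinearMap) y :=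
    HasFDerivAt.comp (g := fun z => M z i j) y (hM i j _).hasFDerivAt hB
  simp only [Matrix.mul_apply]
  rw [(HasFDerivAt.fun_sum fun j _ => (HasFDerivAt.fun_sum fun i _ =>
    (hentry i j).const_mul (P k i)).mul_const (Q j l)).fderiv]
  simp only [_root_.sum_apply, _root_.smul_apply, smul_eq_mul, mul_comm (Q _ l)]
  rfl

theorem matDiv_mul_comp_affine_mul_transpose (hτ : ∀ k l, Differentiable ℝ fun y => τ y k l)
    (a : Fin 2 → ℝ) {B P : Matrix (Fin 2) (Fin 2) ℝ} (hBP : B * P = 1) (y : Fin 2 → ℝ) :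
    matDiv (fun y => P * τ (a + B *ᵥ y) * Pᵀ) y = P *ᵥ matDiv τ (a + B *ᵥ y) := by
  have hcol (l : Fin 2) : ∑ j, P j l • B *ᵥ Pi.single j 1 = Pi.single l 1 := by
    ext i
    simpa [Finset.sum_apply, Matrix.mul_apply, mul_comm, one_apply, Pi.single_apply] using
      congrFun (congrFun hBP i) l
  let L (i l : Fin 2) := fderiv ℝ (fun z => τ z i l) (a + B *ᵥ y)
  ext k
  calc matDiv (fun y => P * τ (a + B *ᵥ y) * Pᵀ) y k
      = ∑ j, ∑ l, (∑ i, P k i * L i l (B *ᵥ Pi.single j 1)) * P j l := by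
        simp only [matDiv, fderiv_mul_comp_affine_mul_apply hτ]
        simp only [mul_apply, of_apply, transpose_apply, L]
    _ = ∑ i, P k i * ∑ l, L i l (∑ j, P j l • B *ᵥ Pi.single j 1) := by
        simp only [Fin.sum_univ_two, map_add, map_smul, smul_eq_mul]
        ring
    _ = (P *ᵥ matDiv τ (a + B *ᵥ y)) k := by
        simp only [hcol]
        rfl

end Divergence

section Triangle

/-- The vertices of the reference triangle. -/
def refVertex : Fin 3 → Fin 2 → ℝ :=
  ![![0, 0], ![1, 0], ![0, 1]]

/-- The Jacobian of `chart x`: its columns are the edge vectors of the triangle at `x 0`. -/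
def edgeMatrix (x : Fin 3 → Fin 2 → ℝ) : Matrix (Fin 2) (Fin 2) ℝ :=
  Matrix.of fun k j => x j.succ k - x 0 k

/-- The affine parametrization of the triangle with vertices `x` by the reference triangle. -/
def chart (x : Fin 3 → Fin 2 → ℝ) : (Fin 2 → ℝ) →ᵃ[ℝ] Fin 2 → ℝ :=
  AffineMap.const ℝ (Fin 2 → ℝ) (x 0) + (edgeMatrix x).mulVecLin.toAffineMap

variable {x : Fin 3 → Fin 2 → ℝ}

theorem chart_apply (x : Fin 3 → Fin 2 → ℝ) (y : Fin 2 → ℝ) :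
    chart x y = x 0 + edgeMatrix x *ᵥ y := rfl

theorem chart_refVertex (x : Fin 3 → Fin 2 → ℝ) (i : Fin 3) : chart x (refVertex i) = x i := by
  ext k
  fin_cases i <;> simp [chart_apply, edgeMatrix, refVertex, vecHead, vecTail]

theorem edgePt_eq_lineMap (x : Fin 3 → Fin 2 → ℝ) (i : Fin 3) (s : ℝ) :
    edgePt x i s = AffineMap.lineMap (x (i + 1)) (x (i + 2)) s :=
  (AffineMap.lineMap_apply_module _ _ _).symm

theorem chart_edgePt_refVertex (x : Fin 3 → Fin 2 → ℝ) (i : Fin 3) (s : ℝ) :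
    chart x (edgePt refVertex i s) = edgePt x i s := by
  simp only [edgePt_eq_lineMap, AffineMap.apply_lineMap, chart_refVertex]

theorem Tset_eq_convexHull_range (x : Fin 3 → Fin 2 → ℝ) :
    Tset x = convexHull ℝ (Set.range x) := by
  rw [Tset]
  congr 1
  ext z
  simp [Fin.exists_fin_succ, eq_comm]

theorem isCompact_Tset (x : Fin 3 → Fin 2 → ℝ) : IsCompact (Tset x) := by
  rw [Tset_eq_convexHull_range]
  exact (Set.finite_range x).isCompact_convexHull ℝ

theorem interior_Tset_nonempty (hx : AffineIndependent ℝ x) : (interior (Tset x)).Nonempty := by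
  rw [Tset_eq_convexHull_range, interior_convexHull_nonempty_iff_affineSpan_eq_top]
  exact hx.affineSpan_eq_top_iff_card_eq_finrank_add_one.2 (by simp)

theorem chart_image_Tset_refVertex (x : Fin 3 → Fin 2 → ℝ) :
    chart x '' Tset refVertex = Tset x := by
  simp only [Tset, AffineMap.image_convexHull, Set.image_insert_eq, Set.image_singleton,
    chart_refVertex]

theorem isUnit_edgeMatrix (hx : AffineIndependent ℝ x) : IsUnit (edgeMatrix x) := by
  refine linearIndependent_cols_iff_isUnit.1 ?_
  exact ((affineIndependent_iff_linearIndependent_vsub ℝ x 0).1 hx).comp _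
    (finSuccAboveEquiv (0 : Fin 3)).injective

theorem chart_surjective (hx : AffineIndependent ℝ x) : Function.Surjective (chart x) := by
  intro z
  obtain ⟨y, hy⟩ := mulVec_surjective_iff_isUnit.2 (isUnit_edgeMatrix hx) (z - x 0)
  exact ⟨y, by simp [chart_apply, hy]⟩

end Triangle

theorem Tset_refVertex : Tset refVertex = {y | 0 ≤ y 0 ∧ 0 ≤ y 1 ∧ y 0 + y 1 ≤ 1} := by
  rw [Tset_eq_convexHull_range]
  refine (convexHull_min ?_ ?_).antisymm ?_
  · rintro _ ⟨i, rfl⟩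
    fin_cases i <;> simp [refVertex]
  · rintro u ⟨hu₀, hu₁, hu⟩ v ⟨hv₀, hv₁, hv⟩ a b ha hb hab
    refine ⟨?_, ?_, ?_⟩
    · exact add_nonneg (mul_nonneg ha hu₀) (mul_nonneg hb hv₀)
    · exact add_nonneg (mul_nonneg ha hu₁) (mul_nonneg hb hv₁)
    · calc (a • u + b • v) 0 + (a • u + b • v) 1
          = a * (u 0 + u 1) + b * (v 0 + v 1) := by
            simp only [Pi.add_apply, Pi.smul_apply, smul_eq_mul]
            ring
        _ ≤ a * 1 + b * 1 := by gcongr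
        _ = 1 := by rw [mul_one, mul_one, hab]
  · rintro y ⟨h₀, h₁, h⟩
    have hy : ∑ i, ![1 - y 0 - y 1, y 0, y 1] i • refVertex i = y := by
      ext k
      fin_cases k <;> simp [refVertex, Fin.sum_univ_three]
    rw [← hy]
    refine (convex_convexHull ℝ _).sum_mem (fun i _ => ?_) ?_ fun i _ =>
      subset_convexHull ℝ _ (Set.mem_range_self i)
    · fin_cases i <;> simp <;> linarith
    · simp [Fin.sum_univ_three]
      ring

theorem setIntegral_Tset_refVertex {f : (Fin 2 → ℝ) → ℝ} (hf : Continuous f) :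
    ∫ y in Tset refVertex, f y = ∫ s in (0 : ℝ)..1, ∫ t in (0 : ℝ)..1 - s, f ![s, t] := by
  have hmeas : MeasurableSet (Tset refVertex) := (isCompact_Tset refVertex).measurableSet
  let F : ℝ × ℝ → ℝ := fun p => (Tset refVertex).indicator f ![p.1, p.2]
  have hF : Integrable F := by
    have hint : Integrable ((Tset refVertex).indicator f) :=
      (hf.continuousOn.integrableOn_compact (isCompact_Tset _)).integrable_indicator hmeas
    exact (volume_preserving_finTwoArrow ℝ).symm.integrable_comp_of_integrable hint
  have hslice (s : ℝ) : ∫ t, F (s, t) =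
      (Set.Icc 0 1).indicator (fun s => ∫ t in (0 : ℝ)..1 - s, f ![s, t]) s := by
    by_cases hs : s ∈ Set.Icc (0 : ℝ) 1
    · have hfiber : (fun t => F (s, t)) = (Set.Icc 0 (1 - s)).indicator fun t => f ![s, t] := by
        ext t
        simp [F, Tset_refVertex, Set.indicator, hs.1, le_sub_iff_add_le']
      rw [hfiber, integral_indicator measurableSet_Icc, Set.indicator_of_mem hs,
        intervalIntegral.integral_of_le (by linarith [hs.2]), integral_Icc_eq_integral_Ioc]
    · have hfiber (t : ℝ) : F (s, t) = 0 := by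
        refine Set.indicator_of_notMem (fun h => hs ?_) _
        simp only [Tset_refVertex, Set.mem_ofPred_eq, cons_val_zero, cons_val_one] at h
        exact ⟨h.1, by linarith⟩
      simp [hfiber, hs]
  calc ∫ y in Tset refVertex, f y = ∫ y, (Tset refVertex).indicator f y :=
        (integral_indicator hmeas).symm
    _ = ∫ p, F p :=
        ((volume_preserving_finTwoArrow ℝ).symm.integral_comp' _).symm
    _ = ∫ s, ∫ t, F (s, t) := integral_prod F hF
    _ = ∫ s in (0 : ℝ)..1, ∫ t in (0 : ℝ)..1 - s, f ![s, t] := by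
        simp only [hslice]
        rw [integral_indicator measurableSet_Icc, intervalIntegral.integral_of_le zero_le_one,
          integral_Icc_eq_integral_Ioc]

theorem intervalIntegral_cubic (a b c d r : ℝ) :
    ∫ t in (0 : ℝ)..r, (a + b * t + c * t ^ 2 + d * t ^ 3) =
      a * r + b * r ^ 2 / 2 + c * r ^ 3 / 3 + d * r ^ 4 / 4 := by
  have hint {f : ℝ → ℝ} (hf : Continuous f) : IntervalIntegrable f volume 0 r :=
    hf.intervalIntegrable 0 r
  rw [intervalIntegral.integral_add (hint (by fun_prop)) (hint (by fun_prop)),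
    intervalIntegral.integral_add (hint (by fun_prop)) (hint (by fun_prop)),
    intervalIntegral.integral_add (hint (by fun_prop)) (hint (by fun_prop))]
  rw [intervalIntegral.integral_const_mul b fun t => t]
  simp [integral_pow]
  ring

theorem setIntegral_Tset_refVertex_of_mem_quadratics {f : (Fin 2 → ℝ) → ℝ}
    (hf : f ∈ quadratics (Fin 2)) :
    ∫ y in Tset refVertex, f y = (∑ i, f (edgePt refVertex i (1 / 2))) / 6 := by
  rw [setIntegral_Tset_refVertex (differentiable_of_mem_quadratics hf).continuous]
  obtain ⟨c, g, H, hf⟩ := hf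
  have hslice (s t : ℝ) : f ![s, t] = (c + g 0 * s + H 0 0 * s ^ 2) +
      (g 1 + (H 0 1 + H 1 0) * s) * t + H 1 1 * t ^ 2 + 0 * t ^ 3 := by
    simp [hf, dotProduct, mulVec, Fin.sum_univ_two]
    ring
  have hinner (s : ℝ) : ∫ t in (0 : ℝ)..1 - s, f ![s, t] =
      (c + g 1 / 2 + H 1 1 / 3) + (g 0 - c - g 1 + (H 0 1 + H 1 0) / 2 - H 1 1) * s +
      (H 0 0 - g 0 + g 1 / 2 - (H 0 1 + H 1 0) + H 1 1) * s ^ 2 +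
      ((H 0 1 + H 1 0) / 2 - H 0 0 - H 1 1 / 3) * s ^ 3 := by
    simp only [hslice, intervalIntegral_cubic]
    ring
  simp only [hinner, intervalIntegral_cubic]
  simp [Fin.sum_univ_three, hf, edgePt, refVertex, dotProduct, mulVec, Fin.sum_univ_two]
  ring

theorem setIntegral_image_affine {ι : Type*} [Fintype ι] [DecidableEq ι] {s : Set (ι → ℝ)}
    (hs : MeasurableSet s) (a : ι → ℝ) {B : Matrix ι ι ℝ} (hB : IsUnit B) (f : (ι → ℝ) → ℝ) :
    ∫ z in (fun y => a + B *ᵥ y) '' s, f z = |B.det| * ∫ y in s, f (a + B *ᵥ y) := by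
  have hderiv (y : ι → ℝ) (_ : y ∈ s) : HasFDerivWithinAt (fun y => a + B *ᵥ y)
      (toLin' B).toContinuousLinearMap s y :=
    ((toLin' B).toContinuousLinearMap.hasFDerivAt.const_add a).hasFDerivWithinAt
  have hinj : Set.InjOn (fun y => a + B *ᵥ y) s :=
    ((add_right_injective a).comp (mulVec_injective_of_isUnit hB)).injOn
  rw [integral_image_eq_integral_abs_det_fderiv_smul volume hs hderiv hinj]
  simp [ContinuousLinearMap.det, integral_const_mul]

theorem setIntegral_Tset_of_mem_quadratics {x : Fin 3 → Fin 2 → ℝ} (hx : AffineIndependent ℝ x)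
    {f : (Fin 2 → ℝ) → ℝ} (hf : f ∈ quadratics (Fin 2)) :
    ∫ y in Tset x, f y = |(edgeMatrix x).det| * ((∑ i, f (edgePt x i (1 / 2))) / 6) := by
  have hpull : (fun y => f (chart x y)) ∈ quadratics (Fin 2) :=
    comp_affine_mem_quadratics hf (x 0) (edgeMatrix x)
  have hchart := setIntegral_Tset_refVertex_of_mem_quadratics hpull
  simp only [chart_edgePt_refVertex] at hchart
  rw [← chart_image_Tset_refVertex, ← hchart]
  exact setIntegral_image_affine (isCompact_Tset refVertex).measurableSet (x 0)
    (isUnit_edgeMatrix hx) f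

theorem sum_edgePt_half_eq_zero {x : Fin 3 → Fin 2 → ℝ} (hx : AffineIndependent ℝ x)
    {f : (Fin 2 → ℝ) → ℝ} (hf : f ∈ quadratics (Fin 2)) (h : ∫ y in Tset x, f y = 0) :
    ∑ i, f (edgePt x i (1 / 2)) = 0 := by
  have hdet : (edgeMatrix x).det ≠ 0 :=
    ((isUnit_iff_isUnit_det _).1 (isUnit_edgeMatrix hx)).ne_zero
  rw [setIntegral_Tset_of_mem_quadratics hx hf] at h
  simpa [hdet] using h

section Normals

variable {x n : Fin 3 → Fin 2 → ℝ}

/-- Outward normals of the reference triangle, scaled so that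
`refNormal i ⬝ᵥ (refVertex (i + 1) - refVertex i) = 1` rather than to unit length. -/
def refNormal : Fin 3 → Fin 2 → ℝ :=
  ![![1, 1], ![-1, 0], ![0, -1]]

/-- The normal-normal component of a matrix with respect to the `i`-th edge of the reference
triangle. -/
def refNormalNormal (i : Fin 3) (M : Matrix (Fin 2) (Fin 2) ℝ) : ℝ :=
  refNormal i ⬝ᵥ M *ᵥ refNormal i

theorem transpose_edgeMatrix_mulVec_normal (hn : IsOuterNormal x n) (i : Fin 3) :
    (edgeMatrix x)ᵀ *ᵥ n i = (n i ⬝ᵥ (x (i + 1) - x i)) • refNormal i := by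
  obtain ⟨-, horth, -⟩ := hn i
  ext k
  fin_cases i <;> fin_cases k <;>
    simp [edgeMatrix, refNormal, mulVec, dotProduct, Fin.sum_univ_two] at horth ⊢ <;> linarith

/-- The contravariant Piola transform of a matrix field to the reference triangle, without the
customary power of the determinant. It preserves symmetry, vanishing of the divergence and vanishing
of the normal-normal components on the edges. -/
def piolaPullback (x : Fin 3 → Fin 2 → ℝ) (τ : (Fin 2 → ℝ) → Matrix (Fin 2) (Fin 2) ℝ)
    (y : Fin 2 → ℝ) : Matrix (Fin 2) (Fin 2) ℝ :=
  (edgeMatrix x)⁻¹ * τ (chart x y) * (edgeMatrix x)⁻¹ᵀ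

variable {τ : (Fin 2 → ℝ) → Matrix (Fin 2) (Fin 2) ℝ}

theorem edgeMatrix_mul_piolaPullback_mul_transpose (hx : AffineIndependent ℝ x) (y : Fin 2 → ℝ) :
    edgeMatrix x * piolaPullback x τ y * (edgeMatrix x)ᵀ = τ (chart x y) := by
  have hdet := (isUnit_iff_isUnit_det _).1 (isUnit_edgeMatrix hx)
  have hinvT : (edgeMatrix x)⁻¹ᵀ * (edgeMatrix x)ᵀ = 1 := by
    rw [← transpose_mul, mul_nonsing_inv _ hdet, transpose_one]
  simp only [piolaPullback, Matrix.mul_assoc, hinvT, Matrix.mul_one]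
  rw [mul_nonsing_inv_cancel_left _ _ hdet]

theorem transpose_piolaPullback (hsymm : ∀ y, (τ y)ᵀ = τ y) (y : Fin 2 → ℝ) :
    (piolaPullback x τ y)ᵀ = piolaPullback x τ y := by
  simp only [piolaPullback, transpose_mul, transpose_transpose, hsymm, Matrix.mul_assoc]

theorem piolaPullback_apply_mem_quadratics (hτ : ∀ k l, (fun y => τ y k l) ∈ quadratics (Fin 2))
    (k l : Fin 2) : (fun y => piolaPullback x τ y k l) ∈ quadratics (Fin 2) := by
  have hexpand : (fun y => piolaPullback x τ y k l) = ∑ j, ∑ i,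
      ((edgeMatrix x)⁻¹ k i * (edgeMatrix x)⁻¹ l j) • fun y => τ (chart x y) i j := by
    ext y
    simp only [piolaPullback, Matrix.mul_apply, transpose_apply, Finset.sum_mul, Finset.sum_apply,
      Pi.smul_apply, smul_eq_mul, mul_right_comm]
  rw [hexpand]
  exact Submodule.sum_mem _ fun j _ => Submodule.sum_mem _ fun i _ => Submodule.smul_mem _ _ <|
    comp_affine_mem_quadratics (hτ i j) (x 0) (edgeMatrix x)

theorem matDiv_piolaPullback (hx : AffineIndependent ℝ x)
    (hτ : ∀ k l, Differentiable ℝ fun y => τ y k l) (y : Fin 2 → ℝ) :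
    matDiv (piolaPullback x τ) y = (edgeMatrix x)⁻¹ *ᵥ matDiv τ (chart x y) :=
  matDiv_mul_comp_affine_mul_transpose hτ (x 0)
    (mul_nonsing_inv _ ((isUnit_iff_isUnit_det _).1 (isUnit_edgeMatrix hx))) y

theorem sum_piolaPullback_edgePt (x : Fin 3 → Fin 2 → ℝ) (s : ℝ) :
    ∑ i, piolaPullback x τ (edgePt refVertex i s) =
      (edgeMatrix x)⁻¹ * (∑ i, τ (edgePt x i s)) * (edgeMatrix x)⁻¹ᵀ := by
  simp only [piolaPullback, chart_edgePt_refVertex, Finset.mul_sum, Finset.sum_mul]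

theorem normal_dotProduct_mulVec_normal (hx : AffineIndependent ℝ x) (hn : IsOuterNormal x n)
    (i : Fin 3) (s : ℝ) :
    n i ⬝ᵥ τ (edgePt x i s) *ᵥ n i = (n i ⬝ᵥ (x (i + 1) - x i)) ^ 2 *
      refNormalNormal i (piolaPullback x τ (edgePt refVertex i s)) := by
  rw [refNormalNormal, ← chart_edgePt_refVertex,
    ← edgeMatrix_mul_piolaPullback_mul_transpose hx (τ := τ), Matrix.mul_assoc, ← mulVec_mulVec,
    ← mulVec_mulVec, dotProduct_mulVec, ← mulVec_transpose, transpose_edgeMatrix_mulVec_normal hn,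
    mulVec_smul, smul_dotProduct, dotProduct_smul, smul_eq_mul, smul_eq_mul]
  ring

end Normals

section VanishingDivergence

variable {σ : (Fin 2 → ℝ) → Matrix (Fin 2) (Fin 2) ℝ}

/-- The barycentric coordinates of the reference triangle: `refBary i` vanishes on the edge with
normal `refNormal i` and is `1` at `refVertex i`. -/
def refBary (i : Fin 3) (y : Fin 2 → ℝ) : ℝ :=
  refNormal i ⬝ᵥ (refVertex (i + 1) - y)

theorem exists_eq_refBary_mul_affine {f : (Fin 2 → ℝ) → ℝ} (hf : f ∈ quadratics (Fin 2)) (i : Fin 3)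
    (h : ∀ s, f (edgePt refVertex i s) = 0) :
    ∃ (a : ℝ) (g : Fin 2 → ℝ), ∀ y, f y = refBary i y * (a + g ⬝ᵥ y) := by
  obtain ⟨c, g, H, hf⟩ := hf
  have h₀ := h 0
  have h₁ := h 1
  have h₂ := h 2
  simp only [hf, edgePt, refVertex, dotProduct, mulVec, Fin.sum_univ_two, refBary] at h₀ h₁ h₂ ⊢
  -- A quadratic in the edge parameter `s` vanishes if it does at `s = 0, 1, 2`; the linear
  -- combinations interpolate it from these values.
  fin_cases i
  · refine ⟨c, ![-H 0 0, -H 1 1], fun y => ?_⟩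
    simp [refNormal] at h₀ h₁ h₂ ⊢
    linear_combination y 0 * h₀ + y 1 * h₁ - y 0 * y 1 * (h₀ - 2 * h₁ + h₂) / 2
  · refine ⟨g 0, ![H 0 0, H 0 1 + H 1 0], fun y => ?_⟩
    simp [refNormal] at h₀ h₁ h₂ ⊢
    linear_combination h₁ + y 1 * (h₀ - h₁) + (y 1 ^ 2 - y 1) * (h₀ - 2 * h₁ + h₂) / 2
  · refine ⟨g 1, ![H 0 1 + H 1 0, H 1 1], fun y => ?_⟩
    simp [refNormal] at h₀ h₁ h₂ ⊢
    linear_combination h₀ + y 0 * (h₁ - h₀) + (y 0 ^ 2 - y 0) * (h₀ - 2 * h₁ + h₂) / 2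

theorem fderiv_refBary_mul_affine_apply (i : Fin 3) (a : ℝ) (g y v : Fin 2 → ℝ) :
    fderiv ℝ (fun y => refBary i y * (a + g ⬝ᵥ y)) y v =
      refBary i y * (g ⬝ᵥ v) - (refNormal i ⬝ᵥ v) * (a + g ⬝ᵥ y) := by
  have hquad (y : Fin 2 → ℝ) : refBary i y * (a + g ⬝ᵥ y) =
      (refNormal i ⬝ᵥ refVertex (i + 1)) * a +
        ((refNormal i ⬝ᵥ refVertex (i + 1)) • g - a • refNormal i) ⬝ᵥ y +
        y ⬝ᵥ (-vecMulVec (refNormal i) g) *ᵥ y := by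
    simp only [refBary, dotProduct_sub, sub_dotProduct, smul_dotProduct, neg_mulVec,
      vecMulVec_mulVec, op_smul_eq_smul, neg_dotProduct, dotProduct_comm y, smul_eq_mul]
    ring
  rw [fderiv_quadratic_apply hquad]
  simp only [refBary, dotProduct_sub, sub_dotProduct, smul_dotProduct, neg_mulVec,
    vecMulVec_mulVec, op_smul_eq_smul, neg_dotProduct, dotProduct_comm y, dotProduct_comm v,
    smul_eq_mul]
  ring

-- Polarization, as `refNormal 0 = -(refNormal 1 + refNormal 2)`.
theorem eq_of_refNormalNormal {M : Matrix (Fin 2) (Fin 2) ℝ} (hM : Mᵀ = M) :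
    M = !![refNormalNormal 1 M,
        (refNormalNormal 0 M - refNormalNormal 1 M - refNormalNormal 2 M) / 2;
      (refNormalNormal 0 M - refNormalNormal 1 M - refNormalNormal 2 M) / 2,
        refNormalNormal 2 M] := by
  have h₁₀ : M 1 0 = M 0 1 := congrFun (congrFun hM 0) 1
  ext k l
  fin_cases k <;> fin_cases l <;>
    simp [refNormalNormal, refNormal, dotProduct, mulVec, Fin.sum_univ_two, h₁₀] <;> ring

theorem refNormalNormal_mem_quadratics (hσ : ∀ k l, (fun y => σ y k l) ∈ quadratics (Fin 2))
    (i : Fin 3) : (fun y => refNormalNormal i (σ y)) ∈ quadratics (Fin 2) := by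
  have hexpand : (fun y => refNormalNormal i (σ y)) =
      ∑ k, ∑ l, (refNormal i k * refNormal i l) • fun y => σ y k l := by
    ext y
    simp only [refNormalNormal, dotProduct, mulVec, Finset.mul_sum, Finset.sum_apply, Pi.smul_apply,
      smul_eq_mul, mul_assoc, mul_comm (σ y _ _)]
  rw [hexpand]
  exact Submodule.sum_mem _ fun k _ => Submodule.sum_mem _ fun l _ =>
    Submodule.smul_mem _ _ (hσ k l)

theorem matDiv_eq_of_refNormalNormal (hsymm : ∀ y, (σ y)ᵀ = σ y) {p : Fin 3 → (Fin 2 → ℝ) → ℝ}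
    (hp : ∀ i, Differentiable ℝ (p i)) (hσp : ∀ i y, refNormalNormal i (σ y) = p i y)
    (y : Fin 2 → ℝ) :
    matDiv σ y = ![fderiv ℝ (p 1) y (Pi.single 0 1) + (fderiv ℝ (p 0) y (Pi.single 1 1) -
        fderiv ℝ (p 1) y (Pi.single 1 1) - fderiv ℝ (p 2) y (Pi.single 1 1)) / 2,
      (fderiv ℝ (p 0) y (Pi.single 0 1) - fderiv ℝ (p 1) y (Pi.single 0 1) -
        fderiv ℝ (p 2) y (Pi.single 0 1)) / 2 + fderiv ℝ (p 2) y (Pi.single 1 1)] := by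
  have hσ (y : Fin 2 → ℝ) : σ y =
      !![p 1 y, (p 0 y - p 1 y - p 2 y) / 2; (p 0 y - p 1 y - p 2 y) / 2, p 2 y] := by
    simpa only [hσp] using eq_of_refNormalNormal (hsymm y)
  have hoff (v : Fin 2 → ℝ) : fderiv ℝ (fun y => (p 0 y - p 1 y - p 2 y) / 2) y v =
      (fderiv ℝ (p 0) y v - fderiv ℝ (p 1) y v - fderiv ℝ (p 2) y v) / 2 := by
    have hderiv := (((hp 0 y).hasFDerivAt.sub (hp 1 y).hasFDerivAt).sub
      (hp 2 y).hasFDerivAt).mul_const (2⁻¹ : ℝ)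
    simp only [div_eq_mul_inv]
    refine (congrArg (· v) hderiv.fderiv).trans ?_
    simp [mul_comm]
  ext k
  fin_cases k <;> simp [matDiv, hσ, hoff]

theorem refBary_cofactor_eq_zero {a : Fin 3 → ℝ} {g : Fin 3 → Fin 2 → ℝ}
    (hsymm : ∀ y, (σ y)ᵀ = σ y)
    (hσ : ∀ i y, refNormalNormal i (σ y) = refBary i y * (a i + g i ⬝ᵥ y))
    (hdiv : ∀ y, matDiv σ y = 0) (hmid : ∑ i, σ (edgePt refVertex i (1 / 2)) = 0) (i : Fin 3) :
    a i = 0 ∧ g i = 0 := by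
  have hmid' (i : Fin 3) : ∑ j, refBary i (edgePt refVertex j (1 / 2)) *
      (a i + g i ⬝ᵥ edgePt refVertex j (1 / 2)) = 0 := by
    simp only [← hσ, refNormalNormal, ← dotProduct_sum, ← sum_mulVec, hmid]
    simp
  have hp (i : Fin 3) : Differentiable ℝ fun y => refBary i y * (a i + g i ⬝ᵥ y) := by
    unfold refBary dotProduct
    fun_prop
  have hdiv' (y : Fin 2 → ℝ) := (matDiv_eq_of_refNormalNormal hsymm hp hσ y).symm.trans (hdiv y)
  simp only [fderiv_refBary_mul_affine_apply] at hdiv'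
  -- Nine linear equations in nine unknowns: the divergence is affine, so it vanishes as soon as it
  -- does at the three vertices.
  have hmid₀ := hmid' 0
  have hmid₁ := hmid' 1
  have hmid₂ := hmid' 2
  have hdiv₀₀ := congrFun (hdiv' (refVertex 0)) 0
  have hdiv₀₁ := congrFun (hdiv' (refVertex 0)) 1
  have hdiv₁₀ := congrFun (hdiv' (refVertex 1)) 0
  have hdiv₁₁ := congrFun (hdiv' (refVertex 1)) 1
  have hdiv₂₀ := congrFun (hdiv' (refVertex 2)) 0
  have hdiv₂₁ := congrFun (hdiv' (refVertex 2)) 1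
  simp [refBary, refNormal, refVertex, edgePt, dotProduct, Fin.sum_univ_two, Fin.sum_univ_three]
    at hmid₀ hmid₁ hmid₂ hdiv₀₀ hdiv₀₁ hdiv₁₀ hdiv₁₁ hdiv₂₀ hdiv₂₁
  rw [funext_iff, Fin.forall_fin_two]
  fin_cases i <;> refine ⟨?_, ?_, ?_⟩ <;>
    dsimp only [Fin.zero_eta, Fin.mk_one, Fin.reduceFinMk, Pi.zero_apply] <;> linarith

theorem eq_zero_of_matDiv_eq_zero_of_sum_edgePt_refVertex_eq_zero
    (hsymm : ∀ y, (σ y)ᵀ = σ y) (hσ : ∀ k l, (fun y => σ y k l) ∈ quadratics (Fin 2))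
    (hnn : ∀ i s, refNormalNormal i (σ (edgePt refVertex i s)) = 0) (hdiv : ∀ y, matDiv σ y = 0)
    (hmid : ∑ i, σ (edgePt refVertex i (1 / 2)) = 0) (y : Fin 2 → ℝ) : σ y = 0 := by
  choose a g hag using fun i =>
    exists_eq_refBary_mul_affine (refNormalNormal_mem_quadratics hσ i) i (hnn i)
  have hσ₀ (i : Fin 3) : refNormalNormal i (σ y) = 0 := by
    obtain ⟨ha, hg⟩ := refBary_cofactor_eq_zero hsymm hag hdiv hmid i
    rw [hag, ha, hg, zero_dotProduct, add_zero, mul_zero]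
  rw [eq_of_refNormalNormal (hsymm y)]
  ext k l
  fin_cases k <;> fin_cases l <;> simp [hσ₀]

theorem eq_zero_of_matDiv_eq_zero_of_sum_edgePt_eq_zero {x n : Fin 3 → Fin 2 → ℝ}
    (hx : AffineIndependent ℝ x) (hn : IsOuterNormal x n)
    {τ : (Fin 2 → ℝ) → Matrix (Fin 2) (Fin 2) ℝ} (hsymm : ∀ y, (τ y)ᵀ = τ y)
    (hτ : ∀ k l, (fun y => τ y k l) ∈ quadratics (Fin 2))
    (hnn : ∀ i s, n i ⬝ᵥ τ (edgePt x i s) *ᵥ n i = 0) (hdiv : ∀ y, matDiv τ y = 0)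
    (hmid : ∑ i, τ (edgePt x i (1 / 2)) = 0) (z : Fin 2 → ℝ) : τ z = 0 := by
  have hσ (y : Fin 2 → ℝ) : piolaPullback x τ y = 0 := by
    refine eq_zero_of_matDiv_eq_zero_of_sum_edgePt_refVertex_eq_zero (transpose_piolaPullback hsymm)
      (piolaPullback_apply_mem_quadratics hτ) (fun i s => ?_) (fun y => ?_) ?_ y
    · have hscaled := normal_dotProduct_mulVec_normal (τ := τ) hx hn i s
      rw [hnn, zero_eq_mul] at hscaled
      exact hscaled.resolve_left (pow_ne_zero 2 (hn i).2.2.ne')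
    · rw [matDiv_piolaPullback hx fun k l => differentiable_of_mem_quadratics (hτ k l), hdiv,
        mulVec_zero]
    · rw [sum_piolaPullback_edgePt, hmid, Matrix.mul_zero, Matrix.zero_mul]
  obtain ⟨y, rfl⟩ := chart_surjective hx z
  rw [← edgeMatrix_mul_piolaPullback_mul_transpose (τ := τ) hx, hσ, Matrix.mul_zero,
    Matrix.zero_mul]

end VanishingDivergence

/-- Unisolvency of the 15 degrees of freedom for `X_T`: if `τ ∈ X_T` has vanishing
edge normal-normal moments against affine polynomials, vanishing entrywise integral over
the triangle, and vanishing moments of its divergence against affine vector fields,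
then `τ = 0`. -/
theorem dofs_unisolvent
    (x n : Fin 3 → Fin 2 → ℝ)
    (hx : AffineIndependent ℝ x)
    (hn : IsOuterNormal x n)
    (τ : (Fin 2 → ℝ) → Matrix (Fin 2) (Fin 2) ℝ)
    (hτ : MemXT x n τ)
    (hdof1 : ∀ i : Fin 3, ∀ q : ℝ → ℝ, (∃ a b : ℝ, ∀ s, q s = a * s + b) →
      (∫ s in (0:ℝ)..1, (n i ⬝ᵥ (τ (edgePt x i s)).mulVec (n i)) * q s) = 0)
    (hdof2 : ∀ k l : Fin 2, (∫ y in Tset x, τ y k l) = 0)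
    (hdof3 : ∀ v : (Fin 2 → ℝ) → Fin 2 → ℝ,
      (∃ (A : Matrix (Fin 2) (Fin 2) ℝ) (b : Fin 2 → ℝ), ∀ y, v y = A.mulVec y + b) →
      (∫ y in Tset x, matDiv τ y ⬝ᵥ v y) = 0) :
    ∀ y, τ y = 0 := by
  obtain ⟨hsymm, hpoly, haff⟩ := hτ
  have hquad (k l : Fin 2) : (fun y => τ y k l) ∈ quadratics (Fin 2) := (hpoly k l).mem_quadratics
  have hdiv (y : Fin 2 → ℝ) : matDiv τ y = 0 :=
    affine_vector_eq_zero_of_moments (isCompact_Tset x) (interior_Tset_nonempty hx)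
      (exists_matDiv_eq_affine hquad) hdof3 y
  have hnn (i : Fin 3) (s : ℝ) : n i ⬝ᵥ τ (edgePt x i s) *ᵥ n i = 0 :=
    affine_eq_zero_of_moments (haff i) (hdof1 i) s
  have hmid : ∑ i, τ (edgePt x i (1 / 2)) = 0 := by
    ext k l
    simpa only [Matrix.sum_apply, Matrix.zero_apply] using
      sum_edgePt_half_eq_zero hx (hquad k l) (hdof2 k l)
  exact eq_zero_of_matDiv_eq_zero_of_sum_edgePt_eq_zero hx hn hsymm hquad hnn hdiv hmid
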